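/- Let A be a C*-algebra, I a closed two-sided ideal of A, and T : A → A an elementary operator, i.e. T(x) = Σ_{i=1}^N a_i x b_i for some elements a_1,…,a_N, b_1,…,b_N of the minimal unitization of A. Let A_sa and I_sa denote the real Banach spaces of self-adjoint elements of A and of I, respectively. Then the closure of T(I_sa) is proximinal in the closure of T(A_sa): for every x in the closure of T(A_sa) there exists y in the closure of T(I_sa) such that ‖x − y‖ = dist(x, closure(T(I_sa))). -/

import Mathlib

/-!
Let `e` run through a quasi-central approximate unit of the ideal. If `‖p‖, ‖q‖ < M`, choose `r` and
`s` with `p⋆p + r⋆r = q⋆q + s⋆s = N²`, where `N < M`. As `e - e² ≥ 0`,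
`(ep + (1 - e)q)⋆(ep + (1 - e)q) ≤ p⋆ep + r⋆er + q⋆(1 - e)q + s⋆(1 - e)s → N²`,
so eventually `‖ep + (1 - e)q‖ < M`.

For `x = T h` and `y₀ = T k`, with `h` self-adjoint and `k` self-adjoint in the ideal, put
`y = α T(e ∘ h)`, where `∘` is the Jordan product. Asymptotically `y ~ e(αx)` and
`x - y ~ e((1 - α)x) + (1 - e)(x - y₀)`, so the norm estimate gives a strict `1½`-ball property of
the two images of `T`, and proximinality follows by successive improvement of approximants.

A quasi-central approximate unit arises from any approximate unit by Mazur's lemma, once the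
commutators `[e, c]` are known to tend weakly to `0`. For the latter, a functional is small on
`z(1 - p)`, uniformly for `z` in a bounded subset of the ideal, for a suitable `p` in the ideal, so
`c` may be replaced by `cp`.
-/

open Filter Topology

section OneAndHalfBall

variable {E F : Type*} [SeminormedAddCommGroup E] [SeminormedAddCommGroup F]

/-- The strict `1½`-ball property of `Y` in `X`: if the open ball `B(x, r)`, `x ∈ X`, meets `Y` and
`‖x‖ < r + ε`, so that `B(x, r)` and `B(0, ε)` meet, then `Y` meets their intersection. -/
def HasOneAndHalfBallProperty (X Y : AddSubgroup E) : Prop :=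
  ∀ x ∈ X, ∀ y₀ ∈ Y, ∀ r ε : ℝ, 0 < ε → ‖x - y₀‖ < r → ‖x‖ < r + ε →
    ∃ y ∈ Y, ‖y‖ < ε ∧ ‖x - y‖ < r

namespace HasOneAndHalfBallProperty

theorem comap {X Y : AddSubgroup F} (h : HasOneAndHalfBallProperty X Y) (φ : E →+ F)
    (hφ : ∀ x, ‖φ x‖ = ‖x‖) (hY : Y ≤ φ.range) :
    HasOneAndHalfBallProperty (X.comap φ) (Y.comap φ) := by
  intro x hx y₀ hy₀ r ε hε hxy hxr
  obtain ⟨_, hyY, hyε, hyr⟩ := h (φ x) hx (φ y₀) hy₀ r ε hε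
    (by rwa [← map_sub, hφ]) (by rwa [hφ])
  obtain ⟨y, rfl⟩ := hY hyY
  rw [← map_sub, hφ] at hyr
  rw [hφ] at hyε
  exact ⟨y, hyY, hyε, hyr⟩

theorem topologicalClosure_left {X Y : AddSubgroup E} (h : HasOneAndHalfBallProperty X Y) :
    HasOneAndHalfBallProperty X.topologicalClosure Y := by
  intro x hx y₀ hy₀ r ε hε hxy hxr
  have hnear : ∀ᶠ x' in 𝓝 x, ‖x' - y₀‖ < r - ‖x - x'‖ ∧ ‖x'‖ < r - ‖x - x'‖ + ε := by
    have hdist : Tendsto (fun x' => r - ‖x - x'‖) (𝓝 x) (𝓝 r) := by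
      have hcont : Continuous fun x' => r - ‖x - x'‖ := by fun_prop
      simpa using hcont.tendsto x
    exact ((tendsto_id.sub_const y₀).norm.eventually_lt hdist hxy).and
      (tendsto_id.norm.eventually_lt (hdist.add_const ε) hxr)
  obtain ⟨x', ⟨hx'y, hx'r⟩, hx'⟩ := mem_closure_iff_nhds.1 hx _ hnear
  obtain ⟨y, hyY, hyε, hyr⟩ := h x' hx' y₀ hy₀ _ ε hε hx'y hx'r
  exact ⟨y, hyY, hyε, by linarith [norm_sub_le_norm_sub_add_norm_sub x x' y]⟩

variable {X Y : AddSubgroup E}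

theorem exists_improvement (h : HasOneAndHalfBallProperty X Y) (hYX : Y ≤ X) {x s : E}
    (hx : x ∈ X) (hs : s ∈ Y) {ε : ℝ} (hε : 0 < ε)
    (hxs : ‖x - s‖ < Metric.infDist x (Y : Set E) + 2 * ε) :
    ∃ s' ∈ Y, ‖x - s'‖ < Metric.infDist x (Y : Set E) + ε ∧ ‖s' - s‖ < ε := by
  obtain ⟨y₁, hy₁, hxy₁⟩ := (Metric.infDist_lt_iff ⟨0, Y.zero_mem⟩).1 (lt_add_of_pos_right _ hε)
  obtain ⟨y, hyY, hyε, hy⟩ := h (x - s) (X.sub_mem hx (hYX hs)) (y₁ - s) (Y.sub_mem hy₁ hs)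
    (Metric.infDist x (Y : Set E) + ε) ε hε
    (by rwa [sub_sub_sub_cancel_right, ← dist_eq_norm]) (by linarith)
  exact ⟨s + y, Y.add_mem hs hyY, by rwa [← sub_sub], by rwa [add_sub_cancel_left]⟩

theorem exists_cauchySeq (h : HasOneAndHalfBallProperty X Y) (hYX : Y ≤ X) {x : E} (hx : x ∈ X) :
    ∃ s : ℕ → E, CauchySeq s ∧
      ∀ n, s n ∈ Y ∧ ‖x - s n‖ < Metric.infDist x (Y : Set E) + 2 * (1 / 2) ^ n := by
  obtain ⟨s₀, hs₀, hxs₀⟩ := (Metric.infDist_lt_iff (x := x) ⟨0, Y.zero_mem⟩).1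
    (lt_add_of_pos_right _ two_pos)
  rw [dist_eq_norm] at hxs₀
  choose! next next_mem dist_next next_near using
    fun s (hs : s ∈ Y) ε (hε : 0 < ε) => h.exists_improvement hYX hx hs hε
  let s : ℕ → E := fun n => Nat.rec s₀ (fun n s => next s ((1 / 2) ^ n)) n
  have hs : ∀ n, s n ∈ Y ∧ ‖x - s n‖ < Metric.infDist x (Y : Set E) + 2 * (1 / 2) ^ n := by
    intro n
    induction n with
    | zero => exact ⟨hs₀, by simpa [s] using hxs₀⟩
    | succ n ih =>
      refine ⟨next_mem _ ih.1 _ (by positivity) ih.2, ?_⟩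
      convert dist_next _ ih.1 _ (by positivity) ih.2 using 2
      rw [pow_succ]
      ring
  refine ⟨s, cauchySeq_of_le_geometric (1 / 2) 1 (by norm_num) fun n => ?_, hs⟩
  rw [one_mul, dist_comm, dist_eq_norm]
  exact (next_near _ (hs n).1 _ (by positivity) (hs n).2).le

theorem exists_norm_sub_eq_infDist [CompleteSpace E] (h : HasOneAndHalfBallProperty X Y)
    (hYX : Y ≤ X) {x : E} (hx : x ∈ X.topologicalClosure) :
    ∃ y ∈ closure (Y : Set E), ‖x - y‖ = Metric.infDist x (closure (Y : Set E)) := by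
  obtain ⟨s, hs_cauchy, hs⟩ := h.topologicalClosure_left.exists_cauchySeq
    (hYX.trans X.le_topologicalClosure) hx
  obtain ⟨y, hsy⟩ := cauchySeq_tendsto_of_complete hs_cauchy
  have hyY : y ∈ closure (Y : Set E) :=
    mem_closure_of_tendsto hsy (.of_forall fun n => (hs n).1)
  refine ⟨y, hyY, le_antisymm ?_ ?_⟩
  · have hgeom : Tendsto (fun n : ℕ => Metric.infDist x (Y : Set E) + 2 * (1 / 2) ^ n) atTop
        (𝓝 (Metric.infDist x (Y : Set E))) := by
      simpa using ((tendsto_pow_atTop_nhds_zero_of_lt_one (r := (1 / 2 : ℝ)) (by norm_num)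
        (by norm_num)).const_mul 2).const_add (Metric.infDist x (Y : Set E))
    rw [Metric.infDist_closure]
    exact le_of_tendsto_of_tendsto' (hsy.const_sub x).norm hgeom fun n => (hs n).2.le
  · rw [← dist_eq_norm]
    exact Metric.infDist_le_dist_of_mem hyY

end HasOneAndHalfBallProperty

end OneAndHalfBall

theorem exists_lt_apply_of_lt_norm_dual {E : Type*} [NormedAddCommGroup E] [NormedSpace ℝ E]
    (f : StrongDual ℝ E) {r : ℝ} (hr : r < ‖f‖) : ∃ x, ‖x‖ < 1 ∧ r < f x := by
  obtain ⟨x, hx, hrx⟩ := f.exists_lt_apply_of_lt_opNorm hr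
  rw [Real.norm_eq_abs] at hrx
  rcases lt_abs.1 hrx with hrx | hrx
  · exact ⟨x, hx, hrx⟩
  · exact ⟨-x, by rwa [norm_neg], by rwa [map_neg]⟩

section WeakConvergence

theorem exists_neBot_forall_tendsto {α ι G : Type*} [PseudoMetricSpace G] {S : Set α}
    (φ : ι → α → G) (w : ι → G)
    (h : ∀ (t : Finset ι), ∀ ε > 0, ∃ e ∈ S, ∀ i ∈ t, dist (φ i e) (w i) ≤ ε) :
    ∃ l : Filter α, l.NeBot ∧ S ∈ l ∧ ∀ i, Tendsto (φ i) l (𝓝 (w i)) := by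
  classical
  choose e he_mem he_dist using fun k : Finset ι × ℕ => h k.1 (1 / (k.2 + 1)) (by positivity)
  refine ⟨map e atTop, inferInstance, mem_map.2 (univ_mem' he_mem), fun i => tendsto_map'_iff.2 ?_⟩
  have hzero : Tendsto (fun k : Finset ι × ℕ => (1 / (k.2 + 1) : ℝ)) atTop (𝓝 0) := by
    rw [← prod_atTop_atTop_eq]
    exact tendsto_one_div_add_atTop_nhds_zero_nat.comp tendsto_snd
  have hi : ∀ᶠ k : Finset ι × ℕ in atTop, i ∈ k.1 := by
    filter_upwards [eventually_ge_atTop ({i}, 0)] with k hk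
    exact hk.1 (Finset.mem_singleton_self i)
  refine tendsto_iff_dist_tendsto_zero.2 (squeeze_zero' (.of_forall fun _ => dist_nonneg) ?_ hzero)
  filter_upwards [hi] with k hk using he_dist k i hk

variable {E G ι : Type*} [AddCommGroup E] [Module ℝ E] [NormedAddCommGroup G] [NormedSpace ℝ G]
  {S : Set E} {l : Filter E} [l.NeBot]

theorem mem_closure_image_pi_of_tendsto_dual [Finite ι] (hS : Convex ℝ S) (hSl : S ∈ l)
    (L : ι → E →ₗ[ℝ] G) (w : ι → G)
    (h : ∀ i (f : StrongDual ℝ G), Tendsto (fun e => f (L i e)) l (𝓝 (f (w i)))) :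
    w ∈ closure (LinearMap.pi L '' S) := by
  classical
  have := Fintype.ofFinite ι
  by_contra hw
  obtain ⟨f, t, hft, htS⟩ := geometric_hahn_banach_point_closed
    (hS.linear_image (LinearMap.pi L)).closure isClosed_closure hw
  let g (i : ι) : StrongDual ℝ G := f.comp (ContinuousLinearMap.single ℝ (fun _ => G) i)
  have hfg (v : ι → G) : f v = ∑ i, g i (v i) := by
    conv_lhs => rw [← Finset.univ_sum_single v]
    exact map_sum f _ _
  have hlim : Tendsto (fun e => f (LinearMap.pi L e)) l (𝓝 (f w)) := by
    simp only [hfg, LinearMap.pi_apply]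
    exact tendsto_finsetSum _ fun i _ => h i (g i)
  refine hft.not_ge (ge_of_tendsto hlim ?_)
  filter_upwards [hSl] with e he using (htS _ (subset_closure (Set.mem_image_of_mem _ he))).le

/-- A form of Mazur's lemma: on a convex set, weak convergence of a family of linear maps can be
upgraded to norm convergence along another filter. -/
theorem exists_neBot_forall_tendsto_of_tendsto_dual (hS : Convex ℝ S) (hSl : S ∈ l)
    (L : ι → E →ₗ[ℝ] G) (w : ι → G)
    (h : ∀ i (f : StrongDual ℝ G), Tendsto (fun e => f (L i e)) l (𝓝 (f (w i)))) :
    ∃ l' : Filter E, l'.NeBot ∧ S ∈ l' ∧ ∀ i, Tendsto (L i) l' (𝓝 (w i)) := by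
  refine exists_neBot_forall_tendsto (fun i => L i) w fun t ε hε => ?_
  have hw := mem_closure_image_pi_of_tendsto_dual hS hSl (fun i : t => L i) (fun i : t => w i)
    fun i => h i
  obtain ⟨_, ⟨e, he, rfl⟩, hdist⟩ := Metric.mem_closure_iff.1 hw ε hε
  refine ⟨e, he, fun i hi => ?_⟩
  rw [dist_comm]
  exact (dist_le_pi_dist (fun i : t => w i) _ ⟨i, hi⟩).trans hdist.le

end WeakConvergence

section AsymptoticallyCentral

variable {R : Type*} [Ring R] [StarRing R] [TopologicalSpace R] [IsTopologicalRing R] {l : Filter R}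

theorem tendsto_star_mul_mul_sub {c : R}
    (hc : Tendsto (fun e => e * star c - star c * e) l (𝓝 0)) :
    Tendsto (fun e => star c * e * c - e * (star c * c)) l (𝓝 0) := by
  have := (hc.mul_const c).neg
  rw [zero_mul, neg_zero] at this
  exact this.congr fun e => by noncomm_ring

theorem tendsto_star_mul_mul_add
    (hl : ∀ c : R, Tendsto (fun e => e * c - c * e) l (𝓝 0)) {p r q s m : R}
    (hp : star p * p + star r * r = m) (hq : star q * q + star s * s = m) :
    Tendsto (fun e => star p * e * p + star r * e * r +
      (star q * (1 - e) * q + star s * (1 - e) * s)) l (𝓝 m) := by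
  have h (c : R) := tendsto_star_mul_mul_sub (hl (star c))
  have hlim := ((((h p).add (h r)).sub ((h q).add (h s))).add_const m)
  simp only [add_zero, sub_zero, zero_add] at hlim
  refine hlim.congr fun e => ?_
  have hpq : e * (star p * p + star r * r) - e * (star q * q + star s * s) = 0 := by
    rw [hp, hq, sub_self]
  rw [← add_zero (_ + _), ← hpq, ← hq]
  noncomm_ring

end AsymptoticallyCentral

section ConvexCombination

variable {B : Type*} [CStarAlgebra B] [PartialOrder B] [StarOrderedRing B]

theorem star_mul_self_convexComb_le {e : B} (he : e ∈ Set.Icc 0 1) (p q : B) :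
    star (e * p + (1 - e) * q) * (e * p + (1 - e) * q) ≤
      star p * e * p + star q * (1 - e) * q := by
  have he_star : star e = e := (IsSelfAdjoint.of_nonneg he.1).star_eq
  have he_sq : 0 ≤ e - e * e := by
    have h₁ := star_left_conjugate_nonneg (sub_nonneg.2 he.2) e
    have h₂ := star_left_conjugate_nonneg he.1 (1 - e)
    rw [star_sub, star_one, he_star] at h₂
    rw [he_star] at h₁
    convert add_nonneg h₁ h₂ using 1
    noncomm_ring
  rw [← sub_nonneg]
  convert star_left_conjugate_nonneg he_sq (p - q) using 1
  simp only [star_add, star_sub, star_mul, star_one, he_star]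
  noncomm_ring

theorem norm_convexComb_sq_le {e : B} (he : e ∈ Set.Icc 0 1) (p q : B) :
    ‖e * p + (1 - e) * q‖ ^ 2 ≤ ‖p‖ ^ 2 + ‖q‖ ^ 2 := by
  have hp : star p * e * p ≤ star p * p := by
    simpa using star_left_conjugate_le_conjugate he.2 p
  have hq : star q * (1 - e) * q ≤ star q * q := by
    simpa using star_left_conjugate_le_conjugate (sub_le_self 1 he.1) q
  have hle := (star_mul_self_convexComb_le he p q).trans (add_le_add hp hq)
  calc ‖e * p + (1 - e) * q‖ ^ 2
      = ‖star (e * p + (1 - e) * q) * (e * p + (1 - e) * q)‖ := by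
        rw [CStarRing.norm_star_mul_self, pow_two]
    _ ≤ ‖star p * p + star q * q‖ :=
        CStarAlgebra.norm_le_norm_of_nonneg_of_le (star_mul_self_nonneg _) hle
    _ ≤ ‖p‖ ^ 2 + ‖q‖ ^ 2 := by
        simpa only [CStarRing.norm_star_mul_self, ← pow_two] using
          norm_add_le (star p * p) (star q * q)

theorem norm_convexComb_right_sq_le {e : B} (he : e ∈ Set.Icc 0 1) (p q : B) :
    ‖p * e + q * (1 - e)‖ ^ 2 ≤ ‖p‖ ^ 2 + ‖q‖ ^ 2 := by
  have he_star : star e = e := (IsSelfAdjoint.of_nonneg he.1).star_eq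
  simpa [← norm_star (p * e + q * (1 - e)), he_star] using
    norm_convexComb_sq_le he (star p) (star q)

theorem norm_convexComb_right_le {e x z : B} (he : e ∈ Set.Icc 0 1) {R δ : ℝ} (hx : ‖x‖ ≤ 1)
    (hz : ‖z‖ ≤ R) : ‖x * e + (δ • z) * (1 - e)‖ ≤ 1 + δ ^ 2 * R ^ 2 := by
  have hsq : ‖x * e + (δ • z) * (1 - e)‖ ^ 2 ≤ 1 + δ ^ 2 * R ^ 2 :=
    calc ‖x * e + (δ • z) * (1 - e)‖ ^ 2
        ≤ ‖x‖ ^ 2 + ‖δ • z‖ ^ 2 := norm_convexComb_right_sq_le he x _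
      _ = ‖x‖ ^ 2 + δ ^ 2 * ‖z‖ ^ 2 := by rw [norm_smul, mul_pow, Real.norm_eq_abs, sq_abs]
      _ ≤ 1 + δ ^ 2 * R ^ 2 := by gcongr; exact pow_le_one₀ (norm_nonneg x) hx
  refine le_of_sq_le_sq (hsq.trans (le_self_pow₀ ?_ two_ne_zero)) (by positivity)
  exact le_add_of_nonneg_right (by positivity)

theorem exists_star_mul_self_add_eq_algebraMap {p : B} {M : ℝ} (hp : ‖p‖ ≤ M) :
    ∃ r : B, star p * p + star r * r = algebraMap ℝ B (M ^ 2) := by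
  nontriviality B
  have hle : star p * p ≤ algebraMap ℝ B (M ^ 2) :=
    CStarAlgebra.star_mul_le_algebraMap_norm_sq.trans (algebraMap_le_algebraMap.2 (by gcongr))
  obtain ⟨r, hr⟩ := CStarAlgebra.nonneg_iff_eq_star_mul_self.1 (sub_nonneg.2 hle)
  exact ⟨r, by rw [← hr, add_sub_cancel]⟩

theorem eventually_norm_convexComb_lt {l : Filter B} (hl_Icc : ∀ᶠ e in l, e ∈ Set.Icc 0 1)
    (hl : ∀ c : B, Tendsto (fun e => e * c - c * e) l (𝓝 0)) {p q : B} {M : ℝ}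
    (hp : ‖p‖ < M) (hq : ‖q‖ < M) : ∀ᶠ e in l, ‖e * p + (1 - e) * q‖ < M := by
  obtain ⟨N, hN, hNM⟩ := exists_between (max_lt hp hq)
  have hN0 : 0 ≤ N := (norm_nonneg p).trans ((le_max_left _ _).trans hN.le)
  obtain ⟨r, hr⟩ := exists_star_mul_self_add_eq_algebraMap ((le_max_left _ _).trans hN.le)
  obtain ⟨s, hs⟩ := exists_star_mul_self_add_eq_algebraMap ((le_max_right _ _).trans hN.le)
  have hlim : ‖algebraMap ℝ B (N ^ 2)‖ < M ^ 2 := by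
    cases subsingleton_or_nontrivial B
    · rw [Subsingleton.elim (algebraMap ℝ B (N ^ 2)) 0, norm_zero]
      nlinarith
    · rw [norm_algebraMap', Real.norm_of_nonneg (sq_nonneg N)]
      gcongr
  filter_upwards [hl_Icc, (tendsto_star_mul_mul_add hl hr hs).norm.eventually_lt_const hlim]
    with e he hlt
  refine lt_of_pow_lt_pow_left₀ 2 (hN0.trans hNM.le) (lt_of_le_of_lt ?_ hlt)
  rw [pow_two, ← CStarRing.norm_star_mul_self]
  refine CStarAlgebra.norm_le_norm_of_nonneg_of_le (star_mul_self_nonneg _)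
    ((star_mul_self_convexComb_le he p q).trans (add_le_add ?_ ?_))
  · exact le_add_of_nonneg_right (star_left_conjugate_nonneg he.1 r)
  · exact le_add_of_nonneg_right (star_left_conjugate_nonneg (sub_nonneg.2 he.2) s)

theorem eventually_norm_convexComb_add_lt {l : Filter B} (hl_Icc : ∀ᶠ e in l, e ∈ Set.Icc 0 1)
    (hl : ∀ c : B, Tendsto (fun e => e * c - c * e) l (𝓝 0)) {p q : B} {M : ℝ}
    (hp : ‖p‖ < M) (hq : ‖q‖ < M) {u : B → B} (hu : Tendsto u l (𝓝 0)) :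
    ∀ᶠ e in l, ‖e * p + (1 - e) * q + u e‖ < M := by
  obtain ⟨N, hN, hNM⟩ := exists_between (max_lt hp hq)
  filter_upwards [eventually_norm_convexComb_lt hl_Icc hl (max_lt_iff.1 hN).1 (max_lt_iff.1 hN).2,
    hu.norm.eventually_lt_const (u := M - N) (by rwa [norm_zero, sub_pos])] with e he hue
  linarith [norm_add_le (e * p + (1 - e) * q) (u e)]

end ConvexCombination

section ApproximateUnit

variable {B : Type*} [CStarAlgebra B] [PartialOrder B] [StarOrderedRing B]

theorem exists_mul_mem_Icc_norm_conjugate_le {h : B} (hh : 0 ≤ h) {ε : ℝ} (hε : 0 < ε) :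
    ∃ g : B, g * h ∈ Set.Icc 0 1 ∧ ‖(1 - g * h) * h * (1 - g * h)‖ ≤ ε := by
  have hspec : ∀ t ∈ spectrum ℝ h, 0 ≤ t := fun t ht => spectrum_nonneg_of_nonneg hh ht
  have hpos : ∀ t ∈ spectrum ℝ h, 0 < ε + t := fun t ht => add_pos_of_pos_of_nonneg hε (hspec t ht)
  have hid : ContinuousOn (fun t : ℝ => t) (spectrum ℝ h) := continuousOn_id' _
  have hinv : ContinuousOn (fun t : ℝ => (ε + t)⁻¹) (spectrum ℝ h) :=
    ContinuousOn.inv₀ (by fun_prop) fun t ht => (hpos t ht).ne'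
  have hinv' : ContinuousOn (fun t : ℝ => ε * (ε + t)⁻¹) (spectrum ℝ h) :=
    continuousOn_const.fun_mul hinv
  have hmul : cfc (fun t : ℝ => (ε + t)⁻¹) h * h = cfc (fun t : ℝ => (ε + t)⁻¹ * t) h := by
    rw [cfc_mul _ _ h hinv hid, cfc_id' ℝ h]
  have hcompl : 1 - cfc (fun t : ℝ => (ε + t)⁻¹) h * h = cfc (fun t : ℝ => ε * (ε + t)⁻¹) h := by
    rw [hmul, ← cfc_const_one ℝ h, ← cfc_sub _ _ h continuousOn_const (hinv.fun_mul hid)]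
    refine cfc_congr fun t ht => ?_
    have := (hpos t ht).ne'
    field_simp
    ring
  have hconj : (1 - cfc (fun t : ℝ => (ε + t)⁻¹) h * h) * h *
      (1 - cfc (fun t : ℝ => (ε + t)⁻¹) h * h) =
      cfc (fun t : ℝ => ε * (ε + t)⁻¹ * t * (ε * (ε + t)⁻¹)) h := by
    rw [hcompl, cfc_mul _ _ h (hinv'.fun_mul hid) hinv', cfc_mul _ _ h hinv' hid, cfc_id' ℝ h]
  refine ⟨cfc (fun t : ℝ => (ε + t)⁻¹) h, ?_, ?_⟩
  · rw [hmul]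
    refine ⟨cfc_nonneg fun t ht => mul_nonneg (inv_nonneg.2 (hpos t ht).le) (hspec t ht),
      cfc_le_one _ _ fun t ht => ?_⟩
    rw [inv_mul_le_one₀ (hpos t ht)]
    linarith
  · rw [hconj]
    refine norm_cfc_le hε.le fun t ht => ?_
    have ht0 := hspec t ht
    have ht1 := hpos t ht
    rw [Real.norm_of_nonneg (by positivity)]
    field_simp
    nlinarith

theorem norm_sub_mul_sq_le {e h y : B} (he : IsSelfAdjoint e) (hy : star y * y ≤ h) :
    ‖y - y * e‖ ^ 2 ≤ ‖(1 - e) * h * (1 - e)‖ := by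
  have he' : star (1 - e) = 1 - e := by rw [star_sub, star_one, he.star_eq]
  have hle := star_left_conjugate_le_conjugate hy (1 - e)
  rw [he'] at hle
  have hsq : star (y - y * e) * (y - y * e) = (1 - e) * (star y * y) * (1 - e) := by
    rw [← mul_one_sub, star_mul, he']
    noncomm_ring
  rw [pow_two, ← CStarRing.norm_star_mul_self]
  exact CStarAlgebra.norm_le_norm_of_nonneg_of_le (star_mul_self_nonneg _) (hsq ▸ hle)

/-- Along the filter `l`, the identity function is a two-sided approximate unit of the (not
necessarily closed) ideal `J`, made of positive contractions of `J`. -/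
structure IsApproximateUnitOf (J : Ideal B) (l : Filter B) : Prop where
  neBot : l.NeBot
  eventually_mem : ∀ᶠ e in l, e ∈ J ∧ e ∈ Set.Icc 0 1
  tendsto_mul_left : ∀ y ∈ J, Tendsto (fun e => e * y) l (𝓝 y)
  tendsto_mul_right : ∀ y ∈ J, Tendsto (fun e => y * e) l (𝓝 y)

theorem exists_mem_forall_norm_sub_mul_le (J : Ideal B) [J.IsTwoSided] (t : Finset J) {ε : ℝ}
    (hε : 0 < ε) : ∃ e ∈ {e | e ∈ J ∧ e ∈ Set.Icc 0 1},
      ∀ y ∈ t, ‖(y : B) - e * y‖ ≤ ε ∧ ‖(y : B) - y * e‖ ≤ ε := by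
  let sq (y : B) : B := star y * y + y * star y
  have sq_nonneg (y : B) : 0 ≤ sq y := add_nonneg (star_mul_self_nonneg y) (mul_star_self_nonneg y)
  let h : B := ∑ y ∈ t, sq y
  have hJ : h ∈ J := J.sum_mem fun y _ =>
    J.add_mem (J.mul_mem_left _ y.2) (J.mul_mem_right _ y.2)
  have sq_le {y : J} (hy : y ∈ t) : sq y ≤ h :=
    Finset.single_le_sum (f := fun y : J => sq y) (fun y _ => sq_nonneg y) hy
  obtain ⟨g, hg, hgε⟩ := exists_mul_mem_Icc_norm_conjugate_le
    (Finset.sum_nonneg fun y _ => sq_nonneg y : 0 ≤ h) (pow_pos hε 2)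
  have he : IsSelfAdjoint (g * h) := .of_nonneg hg.1
  have small {y : B} (hy : star y * y ≤ h) : ‖y - y * (g * h)‖ ≤ ε :=
    le_of_sq_le_sq ((norm_sub_mul_sq_le he hy).trans hgε) hε.le
  refine ⟨g * h, ⟨J.mul_mem_left g hJ, hg⟩, fun y hy => ⟨?_, ?_⟩⟩
  · have hle : star (star (y : B)) * star (y : B) ≤ h := by
      rw [star_star]
      exact (le_add_of_nonneg_left (star_mul_self_nonneg _)).trans (sq_le hy)
    simpa [← norm_star ((y : B) - g * h * y), he.star_eq] using small hle
  · exact small ((le_add_of_nonneg_right (mul_star_self_nonneg _)).trans (sq_le hy))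

theorem exists_isApproximateUnitOf (J : Ideal B) [J.IsTwoSided] :
    ∃ l : Filter B, IsApproximateUnitOf J l := by
  obtain ⟨l, hl, hlJ, hlim⟩ := exists_neBot_forall_tendsto
    (fun (y : J) e => (e * (y : B), (y : B) * e)) (fun y => ((y : B), (y : B)))
    fun t ε hε => by
      obtain ⟨e, he, het⟩ := exists_mem_forall_norm_sub_mul_le J t hε
      refine ⟨e, he, fun y hy => ?_⟩
      rw [dist_comm, Prod.dist_eq, dist_eq_norm, dist_eq_norm]
      exact max_le (het y hy).1 (het y hy).2
  exact ⟨l, hl, hlJ, fun y hy => (hlim ⟨y, hy⟩).fst_nhds, fun y hy => (hlim ⟨y, hy⟩).snd_nhds⟩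

variable {J : Ideal B} {l : Filter B}

theorem IsApproximateUnitOf.exists_forall_abs_apply_sub_mul_le (hl : IsApproximateUnitOf J l)
    (f : StrongDual ℝ B) (R : ℝ) {η : ℝ} (hη : 0 < η) :
    ∃ p ∈ J, ∀ z ∈ J, ‖z‖ ≤ R → |f (z - z * p)| ≤ η := by
  let V : Submodule ℝ B := J.restrictScalars ℝ
  let s : ℝ := ‖f.comp V.subtypeL‖
  have f_le (z : B) (hz : z ∈ J) : f z ≤ s * ‖z‖ :=
    (le_abs_self _).trans ((f.comp V.subtypeL).le_opNorm ⟨z, hz⟩)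
  have hs : 0 < 1 + s * R ^ 2 := by positivity
  let δ : ℝ := η / (1 + s * R ^ 2)
  have hδ : 0 < δ := div_pos hη hs
  have hδη : δ * (1 + s * R ^ 2) = η := div_mul_cancel₀ η hs.ne'
  obtain ⟨x, hx1, hx⟩ := exists_lt_apply_of_lt_norm_dual (f.comp V.subtypeL)
    (sub_lt_self s (pow_pos hδ 2))
  have := hl.neBot
  obtain ⟨p, ⟨hpJ, hp⟩, hxp⟩ := (hl.eventually_mem.and
    (((f.continuous.tendsto _).comp (hl.tendsto_mul_right x x.2)).eventually_const_lt hx)).exists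
  -- `x * p` nearly attains the norm of `f` on `J`; adding `δ • z * (1 - p)` costs only `O(δ ^ 2)`.
  have apply_le (z : B) (hz : z ∈ J) (hzR : ‖z‖ ≤ R) : f (z - z * p) ≤ η := by
    have hmem : (x : B) * p + (δ • z) * (1 - p) ∈ J := by
      rw [mul_one_sub]
      exact J.add_mem (J.mul_mem_left _ hpJ)
        (J.sub_mem (V.smul_mem δ hz) (J.mul_mem_left _ hpJ))
    have hle := (f_le _ hmem).trans
      (mul_le_mul_of_nonneg_left (norm_convexComb_right_le hp hx1.le hzR)
        (norm_nonneg (f.comp V.subtypeL)))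
    rw [smul_mul_assoc, mul_one_sub, map_add, map_smul, smul_eq_mul] at hle
    refine le_of_mul_le_mul_left ?_ hδ
    simp only [Function.comp_apply] at hxp
    rw [← hδη]
    linarith
  refine ⟨p, hpJ, fun z hz hzR => abs_le.2 ⟨?_, apply_le z hz hzR⟩⟩
  have := apply_le (-z) (J.neg_mem hz) (by rwa [norm_neg])
  rw [neg_mul, ← neg_sub', map_neg] at this
  linarith

theorem IsApproximateUnitOf.tendsto_apply_commutator [J.IsTwoSided]
    (hl : IsApproximateUnitOf J l) (f : StrongDual ℝ B) (c : B) :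
    Tendsto (fun e => f (e * c - c * e)) l (𝓝 0) := by
  refine Metric.tendsto_nhds.2 fun ε hε => ?_
  obtain ⟨p, hpJ, hp⟩ := hl.exists_forall_abs_apply_sub_mul_le f ‖c‖ (div_pos hε three_pos)
  have hlim : Tendsto (fun e => f (e * (c * p) - c * (e * p))) l (𝓝 0) := by
    have := (hl.tendsto_mul_left _ (J.mul_mem_left c hpJ)).sub
      ((hl.tendsto_mul_left p hpJ).const_mul c)
    rw [sub_self] at this
    exact map_zero f ▸ (f.continuous.tendsto 0).comp this
  filter_upwards [hl.eventually_mem, Metric.tendsto_nhds.1 hlim _ (div_pos hε three_pos)]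
    with e ⟨heJ, he⟩ hlt
  rw [dist_zero_right, Real.norm_eq_abs] at hlt ⊢
  have he1 : ‖e‖ ≤ 1 := CStarAlgebra.norm_le_one_iff_of_nonneg e he.1 |>.2 he.2
  have hec := hp (e * c) (J.mul_mem_right c heJ)
    ((norm_mul_le_of_le he1 le_rfl).trans_eq (one_mul _))
  have hce := hp (c * e) (J.mul_mem_left c heJ)
    ((norm_mul_le_of_le le_rfl he1).trans_eq (mul_one _))
  have hsplit : f (e * c - c * e) = f (e * c - e * c * p) - f (c * e - c * e * p) +
      f (e * (c * p) - c * (e * p)) := by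
    rw [← map_sub, ← map_add]
    congr 1
    noncomm_ring
  rw [hsplit]
  calc |f (e * c - e * c * p) - f (c * e - c * e * p) + f (e * (c * p) - c * (e * p))|
      ≤ |f (e * c - e * c * p)| + |f (c * e - c * e * p)| + |f (e * (c * p) - c * (e * p))| :=
        (abs_add_le _ _).trans (add_le_add_left (abs_sub _ _) _)
    _ < ε := by linarith

/-- Along the filter `l`, the identity function is a quasi-central approximate unit of the ideal
`J`: it asymptotically commutes with every element of the whole algebra. -/
structure IsQuasicentralApproximateUnitOf (J : Ideal B) (l : Filter B) : Prop
    extends IsApproximateUnitOf J l where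
  tendsto_commutator : ∀ c, Tendsto (fun e => e * c - c * e) l (𝓝 0)

theorem IsApproximateUnitOf.exists_isQuasicentralApproximateUnitOf [J.IsTwoSided]
    (hl : IsApproximateUnitOf J l) : ∃ l' : Filter B, IsQuasicentralApproximateUnitOf J l' := by
  have := hl.neBot
  let L : B ⊕ J → B →ₗ[ℝ] B :=
    Sum.elim (fun c => LinearMap.mulRight ℝ c - LinearMap.mulLeft ℝ c)
      (fun y => LinearMap.mulRight ℝ (y : B))
  let w : B ⊕ J → B := Sum.elim (fun _ => 0) (fun y => y)
  have hconvex : Convex ℝ {e : B | e ∈ J ∧ e ∈ Set.Icc 0 1} :=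
    (J.restrictScalars ℝ).convex.inter (convex_Icc 0 1)
  obtain ⟨l', hl', hmem, hlim⟩ := exists_neBot_forall_tendsto_of_tendsto_dual hconvex
    hl.eventually_mem L w <| by
      rintro (c | y) f
      · simpa [L, w] using hl.tendsto_apply_commutator f c
      · exact (f.continuous.tendsto _).comp (hl.tendsto_mul_left y y.2)
  have hcomm (c : B) : Tendsto (fun e => e * c - c * e) l' (𝓝 0) := hlim (.inl c)
  have hleft (y : B) (hy : y ∈ J) : Tendsto (fun e => e * y) l' (𝓝 y) := hlim (.inr ⟨y, hy⟩)
  refine ⟨l', ⟨hl', hmem, hleft, fun y hy => ?_⟩, hcomm⟩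
  simpa only [sub_sub_cancel, sub_zero] using (hleft y hy).sub (hcomm y)

end ApproximateUnit

section JordanProduct

/-- The Jordan product `x ∘ y = (xy + yx) / 2`, which unlike `xy` is self-adjoint whenever `x` and
`y` are. -/
noncomputable def jordanMul {R : Type*} [NonUnitalRing R] [Module ℝ R] (x y : R) : R :=
  (2⁻¹ : ℝ) • (x * y + y * x)

variable {R : Type*} [NonUnitalRing R] [Module ℝ R] {x y : R}

theorem isSelfAdjoint_jordanMul [StarRing R] [StarModule ℝ R] (hx : IsSelfAdjoint x)
    (hy : IsSelfAdjoint y) : IsSelfAdjoint (jordanMul x y) := by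
  rw [IsSelfAdjoint, jordanMul, star_smul, star_add, star_mul, star_mul, hx.star_eq, hy.star_eq,
    add_comm, star_trivial]

end JordanProduct

section ElementaryOperator

variable {ι R : Type*} [Fintype ι] [Ring R] [Algebra ℝ R]

/-- The elementary operator `x ↦ ∑ i, a i * x * b i` with coefficients `a` and `b`, as a real-linear
map, since it is applied to self-adjoint elements. -/
noncomputable def elementaryOperator (a b : ι → R) : R →ₗ[ℝ] R :=
  ∑ i, LinearMap.mulLeftRight ℝ (a i, b i)

theorem elementaryOperator_apply (a b : ι → R) (x : R) :
    elementaryOperator a b x = ∑ i, a i * x * b i := by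
  simp only [elementaryOperator, LinearMap.sum_apply, LinearMap.mulLeftRight_apply]

theorem jordanMul_mem {J : Ideal R} [J.IsTwoSided] {x : R} (hx : x ∈ J) (y : R) :
    jordanMul x y ∈ J :=
  (J.restrictScalars ℝ).smul_mem _ (J.add_mem (J.mul_mem_right _ hx) (J.mul_mem_left _ hx))

theorem elementaryOperator_mem {J : Ideal R} [J.IsTwoSided] (a b : ι → R) {x : R} (hx : x ∈ J) :
    elementaryOperator a b x ∈ J := by
  rw [elementaryOperator_apply]
  exact J.sum_mem fun i _ => J.mul_mem_right _ (J.mul_mem_left _ hx)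

variable [TopologicalSpace R] [IsTopologicalRing R] [ContinuousConstSMul ℝ R] {l : Filter R}

theorem tendsto_elementaryOperator_jordanMul_sub
    (hl : ∀ c : R, Tendsto (fun e => e * c - c * e) l (𝓝 0)) (a b : ι → R) (h : R) :
    Tendsto (fun e => elementaryOperator a b (jordanMul e h) - e * elementaryOperator a b h) l
      (𝓝 0) := by
  have hlim : Tendsto (fun e => -((2⁻¹ : ℝ) • ∑ i, ((e * a i - a i * e) * (h * b i) +
      (e * (a i * h) - a i * h * e) * b i))) l (𝓝 0) := by
    have := (tendsto_finsetSum Finset.univ fun i _ => ((hl (a i)).mul_const (h * b i)).add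
      ((hl (a i * h)).mul_const (b i))).const_smul (2⁻¹ : ℝ)
    simpa only [zero_mul, add_zero, Finset.sum_const_zero, smul_zero, neg_zero] using this.neg
  refine hlim.congr fun e => ?_
  have hsum (i : ι) : (e * a i - a i * e) * (h * b i) + (e * (a i * h) - a i * h * e) * b i =
      (2 : ℝ) • (e * (a i * h * b i)) - a i * (e * h + h * e) * b i := by
    rw [two_smul]
    noncomm_ring
  rw [jordanMul, map_smul, elementaryOperator_apply, elementaryOperator_apply,
    Finset.sum_congr rfl fun i _ => hsum i, Finset.sum_sub_distrib, ← Finset.smul_sum, smul_sub,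
    inv_smul_smul₀ two_ne_zero, neg_sub, Finset.mul_sum]

end ElementaryOperator

section ElementaryOperatorBall

variable {ι B : Type*} [Fintype ι] [CStarAlgebra B]

theorem IsQuasicentralApproximateUnitOf.eventually_norm_elementaryOperator_jordanMul_lt
    [PartialOrder B] [StarOrderedRing B] {J : Ideal B} [J.IsTwoSided] {l : Filter B}
    (hl : IsQuasicentralApproximateUnitOf J l) (a b : ι → B) {h k : B} (hk : k ∈ J) {α r ε : ℝ}
    (hα : ‖α • elementaryOperator a b h‖ < ε) (hα' : ‖(1 - α) • elementaryOperator a b h‖ < r)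
    (hr : ‖elementaryOperator a b h - elementaryOperator a b k‖ < r) :
    ∀ᶠ e in l, ‖elementaryOperator a b (jordanMul e (α • h))‖ < ε ∧
      ‖elementaryOperator a b h - elementaryOperator a b (jordanMul e (α • h))‖ < r := by
  set T := elementaryOperator a b
  have hIcc : ∀ᶠ e in l, e ∈ Set.Icc 0 1 := hl.eventually_mem.mono fun e he => he.2
  have hTh : Tendsto (fun e => T (jordanMul e (α • h)) - e * α • T h) l (𝓝 0) := by
    simpa only [map_smul] using
      tendsto_elementaryOperator_jordanMul_sub hl.tendsto_commutator a b (α • h)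
  have hTk : Tendsto (fun e => T k - e * T k) l (𝓝 0) := by
    have hTkJ : T k ∈ J := elementaryOperator_mem a b hk
    simpa only [sub_self] using (hl.tendsto_mul_left _ hTkJ).const_sub (T k)
  have hdiff := hTk.sub hTh
  rw [sub_zero] at hdiff
  filter_upwards [
    eventually_norm_convexComb_add_lt hIcc hl.tendsto_commutator hα
      (norm_zero.trans_lt ((norm_nonneg _).trans_lt hα)) hTh,
    eventually_norm_convexComb_add_lt hIcc hl.tendsto_commutator hα' hr hdiff] with e hε hr
  constructor
  · rwa [mul_zero, add_zero, add_sub_cancel] at hε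
  · convert hr using 2
    rw [sub_smul, one_smul]
    noncomm_ring

theorem hasOneAndHalfBallProperty_elementaryOperator (J : Ideal B) [J.IsTwoSided] (a b : ι → B) :
    HasOneAndHalfBallProperty
      ((selfAdjoint B).map (elementaryOperator a b).toAddMonoidHom)
      ((J.toAddSubgroup ⊓ selfAdjoint B).map (elementaryOperator a b).toAddMonoidHom) := by
  let := CStarAlgebra.spectralOrder B
  have := CStarAlgebra.spectralOrderedRing B
  obtain ⟨l₀, hl₀⟩ := exists_isApproximateUnitOf J
  obtain ⟨l, hl⟩ := hl₀.exists_isQuasicentralApproximateUnitOf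
  have := hl.neBot
  rintro _ ⟨h, hh, rfl⟩ _ ⟨k, ⟨hkJ, -⟩, rfl⟩ r ε hε hxy hxr
  have hr : 0 < r := (norm_nonneg _).trans_lt hxy
  let α : ℝ := ε / (r + ε)
  have hα : α * (r + ε) = ε := div_mul_cancel₀ ε (by positivity)
  have hα0 : 0 < α := by positivity
  have hα1 : 0 < 1 - α := sub_pos.2 ((div_lt_one (by positivity)).2 (by linarith))
  have hε_lt : ‖α • elementaryOperator a b h‖ < ε := by
    rw [norm_smul, Real.norm_of_nonneg hα0.le]
    exact (mul_lt_mul_of_pos_left hxr hα0).trans_eq hα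
  have hr_lt : ‖(1 - α) • elementaryOperator a b h‖ < r := by
    rw [norm_smul, Real.norm_of_nonneg hα1.le]
    exact (mul_lt_mul_of_pos_left hxr hα1).trans_eq (by linarith)
  obtain ⟨e, ⟨heJ, he⟩, hye, hyr⟩ := (hl.eventually_mem.and
    (hl.eventually_norm_elementaryOperator_jordanMul_lt a b hkJ hε_lt hr_lt hxy)).exists
  refine ⟨_, ⟨_, ⟨jordanMul_mem heJ _, ?_⟩, rfl⟩, hye, hyr⟩
  exact isSelfAdjoint_jordanMul (.of_nonneg he.1) (IsSelfAdjoint.smul (.all α) hh)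

end ElementaryOperatorBall

section UnitizationIdeal

variable (𝕜 : Type*) {A : Type*} [CommRing 𝕜] [NonUnitalRing A] [Module 𝕜 A]
  [IsScalarTower 𝕜 A A] [SMulCommClass 𝕜 A A]

/-- The largest `𝕜`-linear subideal of the ring ideal `I` of `A`, viewed as an ideal of the
unitization of `A`. If `A` has no unit, `I` itself need not be closed under scalar
multiplication. -/
def unitizationIdeal (I : TwoSidedIdeal A) : Ideal (Unitization 𝕜 A) where
  carrier := {z | z.fst = 0 ∧ ∀ r : 𝕜, r • z.snd ∈ I}
  zero_mem' := ⟨rfl, fun r => by simp [I.zero_mem]⟩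
  add_mem' hx hy := ⟨by simp [hx.1, hy.1], fun r => by
    simpa using I.add_mem (hx.2 r) (hy.2 r)⟩
  smul_mem' c z hz := ⟨by simp [hz.1], fun r => by
    have h := I.add_mem (hz.2 (r * c.fst)) (I.mul_mem_left (r • c.snd) _ (hz.2 1))
    simpa [hz.1, smul_smul, smul_mul_assoc, mul_smul_comm] using h⟩

variable {𝕜}

instance (I : TwoSidedIdeal A) : (unitizationIdeal 𝕜 I).IsTwoSided where
  mul_mem_of_left {z} c hz := ⟨by simp [hz.1], fun r => by
    have h := I.add_mem (hz.2 (r * c.fst)) (I.mul_mem_right _ (r • c.snd) (hz.2 1))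
    simpa [hz.1, smul_smul, smul_mul_assoc, mul_smul_comm] using h⟩

theorem exists_inr_eq_of_mem_unitizationIdeal {I : TwoSidedIdeal A} {z : Unitization 𝕜 A}
    (hz : z ∈ unitizationIdeal 𝕜 I) : ∃ x ∈ I, (x : Unitization 𝕜 A) = z :=
  ⟨z.snd, by simpa using hz.2 1, Unitization.ext hz.1.symm rfl⟩

end UnitizationIdeal

section NonUnital

variable {A ι : Type*} [NonUnitalCStarAlgebra A] [Fintype ι] {I : TwoSidedIdeal A}
  {a b : ι → Unitization ℂ A} {T : A → A}

theorem inr_jordanMul_mem_unitizationIdeal {x : A} (hx : x ∈ I) (e : A) :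
    ((jordanMul e x : A) : Unitization ℂ A) ∈ unitizationIdeal ℂ I := by
  refine ⟨rfl, fun r => ?_⟩
  have hr : r • jordanMul e x = ((2⁻¹ : ℝ) • r • e) * x + x * ((2⁻¹ : ℝ) • r • e) := by
    simp only [jordanMul, smul_add, smul_comm r (2⁻¹ : ℝ), smul_mul_assoc, mul_smul_comm]
  rw [Unitization.snd_inr, hr]
  exact I.add_mem (I.mul_mem_left _ x hx) (I.mul_mem_right x _ hx)

theorem selfAdjoint_subset_closure_unitizationIdeal :
    {x : A | x ∈ I ∧ IsSelfAdjoint x} ⊆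
      closure {x : A | (x : Unitization ℂ A) ∈ unitizationIdeal ℂ I ∧ IsSelfAdjoint x} := by
  rintro x ⟨hxI, hx⟩
  let := CStarAlgebra.spectralOrder A
  have := CStarAlgebra.spectralOrderedRing A
  have hl := CStarAlgebra.increasingApproximateUnit A
  have := hl.neBot
  have hlim : Tendsto (fun e => jordanMul e x) (CStarAlgebra.approximateUnit A) (𝓝 x) := by
    have := ((hl.tendsto_mul_right x).add (hl.tendsto_mul_left x)).const_smul (2⁻¹ : ℝ)
    rwa [← two_smul ℝ x, inv_smul_smul₀ two_ne_zero] at this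
  refine mem_closure_of_tendsto hlim ?_
  filter_upwards [hl.eventually_isSelfAdjoint] with e he
  exact ⟨inr_jordanMul_mem_unitizationIdeal hxI e, isSelfAdjoint_jordanMul he hx⟩

theorem continuous_of_inr_eq_elementaryOperator
    (hT : ∀ x : A, (T x : Unitization ℂ A) = elementaryOperator a b x) : Continuous T := by
  have hinr := Unitization.isometry_inr (𝕜 := ℂ) (A := A)
  simp only [hinr.isEmbedding.continuous_iff, Function.comp_def, hT, elementaryOperator_apply]
  have := hinr.continuous
  fun_prop

theorem coe_comap_inr_map_elementaryOperator
    (hT : ∀ x : A, (T x : Unitization ℂ A) = elementaryOperator a b x) :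
    ((((unitizationIdeal ℂ I).toAddSubgroup ⊓ selfAdjoint (Unitization ℂ A)).map
        (elementaryOperator a b).toAddMonoidHom).comap
        (Unitization.inrHom ℂ ℂ A).toAddMonoidHom : Set A) =
      T '' {x : A | (x : Unitization ℂ A) ∈ unitizationIdeal ℂ I ∧ IsSelfAdjoint x} := by
  ext y
  constructor
  · rintro ⟨z, ⟨hzI, hz⟩, hzy⟩
    obtain ⟨x, -, rfl⟩ := exists_inr_eq_of_mem_unitizationIdeal hzI
    exact ⟨x, ⟨hzI, Unitization.isSelfAdjoint_inr.1 hz⟩,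
      Unitization.inr_injective ((hT x).trans hzy)⟩
  · rintro ⟨x, ⟨hxI, hx⟩, rfl⟩
    exact ⟨x, ⟨hxI, Unitization.isSelfAdjoint_inr.2 hx⟩, (hT x).symm⟩

theorem closure_comap_inr_map_elementaryOperator
    (hT : ∀ x : A, (T x : Unitization ℂ A) = elementaryOperator a b x) :
    closure ((((unitizationIdeal ℂ I).toAddSubgroup ⊓ selfAdjoint (Unitization ℂ A)).map
        (elementaryOperator a b).toAddMonoidHom).comap
        (Unitization.inrHom ℂ ℂ A).toAddMonoidHom : Set A) =
      closure (T '' {x : A | x ∈ I ∧ IsSelfAdjoint x}) := by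
  rw [coe_comap_inr_map_elementaryOperator hT]
  refine (closure_mono (Set.image_mono ?_)).antisymm (closure_minimal ?_ isClosed_closure)
  · rintro x ⟨hxI, hx⟩
    obtain ⟨x', hx', hxx'⟩ := exists_inr_eq_of_mem_unitizationIdeal hxI
    exact ⟨Unitization.inr_injective hxx' ▸ hx', hx⟩
  · exact (Set.image_mono selfAdjoint_subset_closure_unitizationIdeal).trans
      (image_closure_subset_closure_image (continuous_of_inr_eq_elementaryOperator hT))

end NonUnital

theorem stmt_1_general {A ι : Type*} [NonUnitalCStarAlgebra A] [Fintype ι]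
    (I : TwoSidedIdeal A) (a b : ι → Unitization ℂ A) (T : A → A)
    (hT : ∀ x : A, (T x : Unitization ℂ A) = ∑ i, a i * (x : Unitization ℂ A) * b i) :
    ∀ x ∈ closure (T '' {x : A | IsSelfAdjoint x}),
      ∃ y ∈ closure (T '' {x : A | x ∈ I ∧ IsSelfAdjoint x}),
        ‖x - y‖ = Metric.infDist x (closure (T '' {x : A | x ∈ I ∧ IsSelfAdjoint x})) := by
  intro x hx
  simp only [← elementaryOperator_apply] at hT
  have hball := (hasOneAndHalfBallProperty_elementaryOperator (unitizationIdeal ℂ I) a b).comap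
    (Unitization.inrHom ℂ ℂ A).toAddMonoidHom Unitization.norm_inr <| by
      rintro _ ⟨z, ⟨hz, -⟩, rfl⟩
      obtain ⟨y, -, hy⟩ := exists_inr_eq_of_mem_unitizationIdeal (elementaryOperator_mem a b hz)
      exact ⟨y, hy⟩
  rw [← closure_comap_inr_map_elementaryOperator hT]
  refine hball.exists_norm_sub_eq_infDist
    (AddSubgroup.comap_mono (AddSubgroup.map_mono inf_le_right)) (closure_mono ?_ hx)
  rintro _ ⟨y, hy, rfl⟩
  exact ⟨y, Unitization.isSelfAdjoint_inr.2 hy, (hT y).symm⟩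

/-- Let `A` be a C*-algebra, `I` a closed two-sided ideal of `A`, and
`T : A → A` an elementary operator with coefficients in the minimal unitization. Then the
closure of `T(I_sa)` is proximinal in the closure of `T(A_sa)`, where `A_sa` and `I_sa`
denote the self-adjoint parts. -/
theorem stmt_1 {A : Type*} [NonUnitalCStarAlgebra A]
    (I : TwoSidedIdeal A) (hI : IsClosed (I : Set A))
    (N : ℕ) (a b : Fin N → Unitization ℂ A) (T : A → A)
    (hT : ∀ x : A, (T x : Unitization ℂ A) = ∑ i, a i * (x : Unitization ℂ A) * b i) :
    ∀ x ∈ closure (T '' {x : A | IsSelfAdjoint x}),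
      ∃ y ∈ closure (T '' {x : A | x ∈ I ∧ IsSelfAdjoint x}),
        ‖x - y‖ = Metric.infDist x (closure (T '' {x : A | x ∈ I ∧ IsSelfAdjoint x})) :=
  stmt_1_general I a b T hT
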